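/- Let V be a congruence modular variety, with Gumm terms d₁,…,dₙ,q. Define terms q₂(x,y,z) := q(x,y,z) and q_{m+1}(x,y,z) := q(x,q_m(x,y,y),q_m(x,y,z)) for m ≥ 2. Then for each m ≥ 2, q_m is an m-difference term for V: q_m(x,x,z) = z holds identically in V, and for all a,b in any A ∈ V, q_m(a,b,b) is congruent to a modulo [θ,…,θ]_m, where θ is the congruence of A generated by (a,b). -/

import Mathlib

set_option autoImplicit false

namespace UA

/-- A signature: a type of operation symbols, each with a finite arity. -/
structure Signature : Type 1 where
  ops : Type
  arity : ops → ℕ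

/-- An algebra for a signature: a carrier set together with an interpretation
of every operation symbol. -/
structure Algebra (σ : Signature) : Type 1 where
  carrier : Type
  interp : (o : σ.ops) → (Fin (σ.arity o) → carrier) → carrier

variable {σ : Signature}

/-- A congruence of an algebra: an equivalence relation compatible with all
basic operations. -/
structure Con (A : Algebra σ) : Type where
  r : A.carrier → A.carrier → Prop
  refl : ∀ a, r a a
  symm : ∀ {a b}, r a b → r b a
  trans : ∀ {a b c}, r a b → r b c → r a c
  compat : ∀ (o : σ.ops) (x y : Fin (σ.arity o) → A.carrier),
      (∀ i, r (x i) (y i)) → r (A.interp o x) (A.interp o y)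

namespace Con

variable {A : Algebra σ}

instance : LE (Con A) := ⟨fun c d => ∀ a b : A.carrier, c.r a b → d.r a b⟩
instance : LT (Con A) := ⟨fun c d => c ≤ d ∧ ¬ d ≤ c⟩

/-- The total congruence `1_A`. -/
def top : Con A where
  r := fun _ _ => True
  refl := fun _ => trivial
  symm := fun _ => trivial
  trans := fun _ _ => trivial
  compat := fun _ _ _ _ => trivial

/-- The identity congruence `0_A`. -/
def bot : Con A where
  r := fun a b => a = b
  refl := fun _ => rfl
  symm := fun h => h.symm
  trans := fun h h' => h.trans h'
  compat := fun o _ _ h => congrArg (A.interp o) (funext h)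

/-- Meet of an arbitrary family of congruences (intersection). -/
def sInf (S : Set (Con A)) : Con A where
  r a b := ∀ c ∈ S, c.r a b
  refl a c _ := c.refl a
  symm h c hc := c.symm (h c hc)
  trans h h' c hc := c.trans (h c hc) (h' c hc)
  compat o x y h c hc := c.compat o x y (fun i => h i c hc)

/-- Binary meet of congruences. -/
def inf (c d : Con A) : Con A where
  r a b := c.r a b ∧ d.r a b
  refl a := ⟨c.refl a, d.refl a⟩
  symm h := ⟨c.symm h.1, d.symm h.2⟩
  trans h h' := ⟨c.trans h.1 h'.1, d.trans h.2 h'.2⟩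
  compat o x y h := ⟨c.compat o x y fun i => (h i).1, d.compat o x y fun i => (h i).2⟩

/-- The congruence generated by a set of pairs. -/
def conGen (S : Set (A.carrier × A.carrier)) : Con A :=
  sInf {c : Con A | ∀ p ∈ S, c.r p.1 p.2}

/-- Binary join of congruences. -/
def sup (c d : Con A) : Con A := conGen {p | c.r p.1 p.2 ∨ d.r p.1 p.2}

/-- Join of a family of congruences. -/
def iSup {I : Type} (f : I → Con A) : Con A := conGen {p | ∃ i, (f i).r p.1 p.2}

/-- Composition of congruences as binary relations. -/
def comp (c d : Con A) (a b : A.carrier) : Prop := ∃ x, c.r a x ∧ d.r x b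

/-- `d` covers `c` in the congruence lattice. -/
def Covers (c d : Con A) : Prop := c < d ∧ ∀ e : Con A, c < e → e ≤ d → e = d

theorem le_sup_right {c d : Con A} : d ≤ sup c d :=
  fun a b h e he => he (a, b) (Or.inr h)

def toSetoid (c : Con A) : Setoid A.carrier := ⟨c.r, ⟨c.refl, c.symm, c.trans⟩⟩

end Con

/-- The quotient algebra `A/γ`. -/
noncomputable def quotAlg (A : Algebra σ) (γ : Con A) : Algebra σ where
  carrier := Quotient γ.toSetoid
  interp o x := Quotient.mk γ.toSetoid (A.interp o (fun i => (x i).out))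

/-- The quotient congruence `α/γ` for `γ ≤ α`. -/
noncomputable def Con.quot {A : Algebra σ} (α γ : Con A) (h : γ ≤ α) : Con (quotAlg A γ) where
  r x y := Quotient.liftOn₂ x y (fun a b => α.r a b)
    (fun a b a' b' ha hb => propext
      ⟨fun hr => α.trans (α.symm (h _ _ ha)) (α.trans hr (h _ _ hb)),
       fun hr => α.trans (h _ _ ha) (α.trans hr (α.symm (h _ _ hb)))⟩)
  refl x := Quotient.inductionOn x fun a => α.refl a
  symm {x y} h' := Quotient.inductionOn₂ x y (fun _ _ hab => α.symm hab) h'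
  trans {x y z} h1 h2 :=
    Quotient.inductionOn₃ x y z (fun _ _ _ hab hbc => α.trans hab hbc) h1 h2
  compat o x y hxy := by
    show α.r (A.interp o fun i => (x i).out) (A.interp o fun i => (y i).out)
    refine α.compat o _ _ fun i => ?_
    have h1 := hxy i
    rw [← Quotient.out_eq (x i), ← Quotient.out_eq (y i)] at h1
    exact h1

/-- The polynomial operations of an algebra: the clone generated by the basic
operations, the projections and the constants. -/
inductive IsPolynomial (A : Algebra σ) : {n : ℕ} → ((Fin n → A.carrier) → A.carrier) → Prop
  | proj {n : ℕ} (i : Fin n) : IsPolynomial A (fun x => x i)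
  | const {n : ℕ} (a : A.carrier) : IsPolynomial A (fun _ : Fin n → A.carrier => a)
  | app {n : ℕ} (o : σ.ops) (g : Fin (σ.arity o) → (Fin n → A.carrier) → A.carrier) :
      (∀ j, IsPolynomial A (g j)) → IsPolynomial A (fun x => A.interp o (fun j => g j x))

/-- Substituting, coordinatewise according to the grouping `g` and the choice
vector `ε`, the entries of `b` (where `ε` is `true`) or of `a` (where `ε` is `false`). -/
def chooseVec {β : Type} {N n : ℕ} (g : Fin N → Fin n) (a b : Fin N → β)
    (ε : Fin n → Bool) : Fin N → β :=
  fun i => if ε (g i) then b i else a i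

/-- The higher centralizer relation `C(α₁,…,αₙ,β;δ)` of Bulatov.  Polynomials with
grouped variables are modelled by a polynomial `p` of arity `N` together with a
grouping map `g : Fin N → Fin (n+1)`; the group `Fin.last n` is the `β`-group. -/
def Centralizes {A : Algebra σ} {n : ℕ} (α : Fin n → Con A) (β δ : Con A) : Prop :=
  ∀ (N : ℕ) (p : (Fin N → A.carrier) → A.carrier), IsPolynomial A p →
    ∀ (g : Fin N → Fin (n + 1)) (a b : Fin N → A.carrier),
      (∀ i, (Fin.lastCases (motive := fun _ => Con A) β α (g i)).r (a i) (b i)) →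
      (∀ ε : Fin n → Bool, ε ≠ (fun _ => true) →
        δ.r (p (chooseVec g a b (Fin.lastCases (motive := fun _ => Bool) false ε)))
            (p (chooseVec g a b (Fin.lastCases (motive := fun _ => Bool) true ε)))) →
      δ.r (p (chooseVec g a b (Fin.lastCases (motive := fun _ => Bool) false fun _ => true)))
          (p (chooseVec g a b (Fin.lastCases (motive := fun _ => Bool) true fun _ => true)))

/-- The higher commutator `[α₁,…,αₙ,β]`: the smallest congruence `δ` such that
`C(α₁,…,αₙ,β;δ)` holds. -/
def commutator {A : Algebra σ} {n : ℕ} (α : Fin n → Con A) (β : Con A) : Con A :=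
  Con.sInf {δ : Con A | Centralizes α β δ}

/-- The higher commutator of a nonempty list of congruences, with the convention
`[α] = α` for a single congruence. -/
def commList {A : Algebra σ} : {n : ℕ} → (Fin (n + 1) → Con A) → Con A
  | 0, γ => γ 0
  | (n+1), γ => commutator (fun j : Fin (n+1) => γ j.castSucc) (γ (Fin.last (n+1)))

/-- The `m`-fold commutator `[θ,…,θ]_m` (for `m ≥ 1`). -/
def nfold {A : Algebra σ} (θ : Con A) (m : ℕ) : Con A :=
  commList (fun _ : Fin (m - 1 + 1) => θ)

/-- The binary commutator `[c,d]`. -/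
def binComm {A : Algebra σ} (c d : Con A) : Con A := commutator (fun _ : Fin 1 => c) d

/-- The lower central series `(θ]ⁿ`. -/
def lcs {A : Algebra σ} (θ : Con A) : ℕ → Con A
  | 0 => θ
  | (k+1) => binComm θ (lcs θ k)

/-- The derived series `[θ]ⁿ`. -/
def derived {A : Algebra σ} (θ : Con A) : ℕ → Con A
  | 0 => θ
  | (k+1) => binComm (derived θ k) (derived θ k)

/-- An algebra is nilpotent if some term of the lower central series of `1_A` is `0_A`. -/
def Nilpotent (A : Algebra σ) : Prop := ∃ m, lcs (Con.top : Con A) m = Con.bot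

/-- An algebra is nilpotent of class `n` if `(1_A]ⁿ = 0_A`. -/
def NilpotentOfClass (A : Algebra σ) (n : ℕ) : Prop := lcs (Con.top : Con A) n = Con.bot

/-- A congruence is solvable if some term of its derived series is `0_A`. -/
def SolvableCon {A : Algebra σ} (θ : Con A) : Prop := ∃ m, derived θ m = Con.bot

/-- `A` is `n`-supernilpotent if `[1_A,…,1_A]_n = 0_A`. -/
def Supernilpotent (A : Algebra σ) (n : ℕ) : Prop := nfold (Con.top : Con A) n = Con.bot

/-- A polynomial `f` absorbs the tuple `a` to the element `c`. -/
def Absorbs (A : Algebra σ) {k : ℕ} (f : (Fin k → A.carrier) → A.carrier)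
    (a : Fin k → A.carrier) (c : A.carrier) : Prop :=
  ∀ b : Fin k → A.carrier, (∃ i, b i = a i) → f b = c

/-- Terms over a signature with variables in `X`. -/
inductive Term (σ : Signature) (X : Type) : Type
  | var : X → Term σ X
  | app : (o : σ.ops) → (Fin (σ.arity o) → Term σ X) → Term σ X

/-- Evaluation of a term in an algebra under an assignment of the variables. -/
def Term.eval {X : Type} (A : Algebra σ) (v : X → A.carrier) : Term σ X → A.carrier
  | Term.var x => v x
  | Term.app o t => A.interp o fun i => Term.eval A v (t i)

/-- Substitution of terms into a term. -/
def Term.subst {X Y : Type} : Term σ X → (X → Term σ Y) → Term σ Y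
  | Term.var x, s => s x
  | Term.app o t, s => Term.app o fun i => Term.subst (t i) s

/-- `A` possesses a Mal'cev term. -/
def HasMalcevTerm (A : Algebra σ) : Prop :=
  ∃ t : Term σ (Fin 3), ∀ a b : A.carrier,
    t.eval A ![a, b, b] = a ∧ t.eval A ![b, b, a] = a

/-- A class of algebras is a variety when it is the class of all models of a set
of identities. -/
def IsVariety (V : Algebra σ → Prop) : Prop :=
  ∃ E : Set (Term σ ℕ × Term σ ℕ),
    ∀ A : Algebra σ, V A ↔ ∀ e ∈ E, ∀ v : ℕ → A.carrier, e.1.eval A v = e.2.eval A v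

/-- Two terms are `V`-equivalent when they evaluate equally in every member of `V`. -/
def vSetoid (V : Algebra σ → Prop) (X : Type) : Setoid (Term σ X) where
  r t s := ∀ A : Algebra σ, V A → ∀ v : X → A.carrier, t.eval A v = s.eval A v
  iseqv := ⟨fun _ _ _ _ => rfl, fun h A hA v => (h A hA v).symm,
    fun h h' A hA v => (h A hA v).trans (h' A hA v)⟩

/-- The `V`-free algebra on the set `X` of generators. -/
noncomputable def freeAlg (V : Algebra σ → Prop) (X : Type) : Algebra σ where
  carrier := Quotient (vSetoid V X)
  interp o x := Quotient.mk (vSetoid V X) (Term.app o fun i => (x i).out)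

/-- The principal congruence `θ(a,b)` generated by the pair `(a,b)`. -/
def conPair (A : Algebra σ) (a b : A.carrier) : Con A := Con.conGen {(a, b)}

/-- A weak difference term for the class `V`. -/
def IsWeakDiffTerm (V : Algebra σ → Prop) (c : Term σ (Fin 3)) : Prop :=
  ∀ A : Algebra σ, V A → ∀ a b : A.carrier,
    (binComm (conPair A a b) (conPair A a b)).r (c.eval A ![a, b, b]) a ∧
    (binComm (conPair A a b) (conPair A a b)).r a (c.eval A ![b, b, a])

/-- A weak `n`-difference term for the class `V`. -/
def IsWeakNDiffTerm (V : Algebra σ → Prop) (n : ℕ) (c : Term σ (Fin 3)) : Prop :=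
  ∀ A : Algebra σ, V A → ∀ a b : A.carrier,
    (nfold (conPair A a b) n).r (c.eval A ![a, b, b]) a ∧
    (nfold (conPair A a b) n).r a (c.eval A ![b, b, a])

/-- Order-preserving maps on the congruence lattice. -/
def MonotoneCon {A : Algebra σ} (F : Con A → Con A) : Prop :=
  ∀ c d : Con A, c ≤ d → F c ≤ F d

/-- `p` is a weak `f`-term of `A` with respect to the interpretation `F`. -/
def IsWeakFTerm (A : Algebra σ) (F : Con A → Con A) (p : Term σ (Fin 3)) : Prop :=
  ∀ (θ : Con A) (a b : A.carrier), θ.r a b →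
    (F θ).r (p.eval A ![a, b, b]) a ∧ (F θ).r a (p.eval A ![b, b, a])

/-- `p` is a weak `f`-term for the class `V`. -/
def HasWeakFTermVariety (V : Algebra σ → Prop) (p : Term σ (Fin 3)) : Prop :=
  ∀ A : Algebra σ, V A → ∃ F : Con A → Con A, MonotoneCon F ∧ IsWeakFTerm A F p

/-- The set `T^θ_{n,f}(θ₁,…,θₙ)` of pairs coming from polynomials which
`f(θ)`-absorb on the cube `{ā₁,b̄₁}×⋯×{āₙ,b̄ₙ}`. -/
def TSet (A : Algebra σ) (F : Con A → Con A) (θ : Con A) {n : ℕ} (θs : Fin n → Con A) :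
    Set (A.carrier × A.carrier) :=
  {pr | ∃ (N : ℕ) (g : (Fin N → A.carrier) → A.carrier), IsPolynomial A g ∧
    ∃ (gr : Fin N → Fin n) (a b : Fin N → A.carrier),
      (∀ i, (θs (gr i)).r (a i) (b i)) ∧
      (∀ ε : Fin n → Bool, (∃ j, ε j = false) →
        (F θ).r (g (fun i => if ε (gr i) then b i else a i)) (g a)) ∧
      pr = (g b, g a)}

/-- Homomorphisms of algebras. -/
def IsHom (A B : Algebra σ) (h : A.carrier → B.carrier) : Prop :=
  ∀ (o : σ.ops) (x : Fin (σ.arity o) → A.carrier),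
    h (A.interp o x) = B.interp o (fun i => h (x i))

/-- The product of a family of algebras. -/
def prodAlg {I : Type} (As : I → Algebra σ) : Algebra σ where
  carrier := ∀ i, (As i).carrier
  interp o x i := (As i).interp o (fun j => x j i)

/-- The subuniverse generated by a subset. -/
inductive Gen (A : Algebra σ) (S : Set A.carrier) : A.carrier → Prop
  | base {a : A.carrier} : a ∈ S → Gen A S a
  | app (o : σ.ops) (x : Fin (σ.arity o) → A.carrier) :
      (∀ i, Gen A S (x i)) → Gen A S (A.interp o x)

/-- `A` possesses a Taylor term. -/
def HasTaylorTerm (A : Algebra σ) : Prop :=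
  ∃ (n : ℕ) (t : Term σ (Fin n)), 1 ≤ n ∧
    (∀ a : A.carrier, t.eval A (fun _ => a) = a) ∧
    ∀ i : Fin n, ∃ u v : Fin n → Bool, u i = true ∧ v i = false ∧
      ∀ x y : A.carrier,
        t.eval A (fun j => if u j then x else y) = t.eval A (fun j => if v j then x else y)

/-- The variety `V` possesses a Taylor term. -/
def VarietyHasTaylorTerm (V : Algebra σ → Prop) : Prop :=
  ∃ (n : ℕ) (t : Term σ (Fin n)), 1 ≤ n ∧
    (∀ A : Algebra σ, V A → ∀ a : A.carrier, t.eval A (fun _ => a) = a) ∧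
    ∀ i : Fin n, ∃ u v : Fin n → Bool, u i = true ∧ v i = false ∧
      ∀ A : Algebra σ, V A → ∀ x y : A.carrier,
        t.eval A (fun j => if u j then x else y) = t.eval A (fun j => if v j then x else y)

/-- `Ξ(θ)`: the smallest set of congruences containing `θ` and closed under
higher commutators (of arity at least 2) of its members. -/
inductive Xi {A : Algebra σ} (θ : Con A) : Con A → Prop
  | base : Xi θ θ
  | comm {k : ℕ} (γ : Fin (k + 2) → Con A) : (∀ j, Xi θ (γ j)) → Xi θ (commList γ)

/-- An expanded loop on the carrier `α` with extra operations indexed by `ι`. -/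
structure ExpLoop (ι : Type) (ar : ι → ℕ) (α : Type) : Type where
  mul : α → α → α
  ldiv : α → α → α
  rdiv : α → α → α
  zero : α
  extra : (i : ι) → (Fin (ar i) → α) → α
  ldiv_mul : ∀ x y, ldiv x (mul x y) = y
  mul_rdiv : ∀ x y, rdiv (mul x y) y = x
  mul_ldiv : ∀ x y, mul x (ldiv x y) = y
  rdiv_mul : ∀ x y, mul (rdiv x y) y = x
  zero_mul : ∀ x, mul zero x = x
  mul_zero : ∀ x, mul x zero = x

/-- Operation symbols of an expanded loop. -/
inductive LoopOp (ι : Type) : Type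
  | mul | ldiv | rdiv | zero
  | extra : ι → LoopOp ι

/-- The signature of an expanded loop. -/
@[reducible] def loopSig (ι : Type) (ar : ι → ℕ) : Signature where
  ops := LoopOp ι
  arity o := match o with
    | .mul => 2
    | .ldiv => 2
    | .rdiv => 2
    | .zero => 0
    | .extra i => ar i

/-- The algebra underlying an expanded loop. -/
def ExpLoop.toAlgebra {ι : Type} {ar : ι → ℕ} {α : Type} (L : ExpLoop ι ar α) :
    Algebra (loopSig ι ar) where
  carrier := α
  interp o := match o with
    | .mul => fun x => L.mul (x 0) (x 1)
    | .ldiv => fun x => L.ldiv (x 0) (x 1)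
    | .rdiv => fun x => L.rdiv (x 0) (x 1)
    | .zero => fun _ => L.zero
    | .extra i => L.extra i

/-- An expanded loop is of `n`-type. -/
def ExpLoop.IsNType {ι : Type} {ar : ι → ℕ} {α : Type} (L : ExpLoop ι ar α) (n : ℕ) : Prop :=
  (∀ p : Σ k : ℕ, (Fin k → α) → α,
      (∃ i : ι, p = ⟨ar i, L.extra i⟩) ↔
        (1 ≤ p.1 ∧ p.1 ≤ n - 1 ∧ IsPolynomial L.toAlgebra p.2 ∧
          Absorbs L.toAlgebra p.2 (fun _ => L.zero) L.zero)) ∧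
  (∀ f : (Fin (n - 1) → α) → α,
      IsPolynomial L.toAlgebra f → Absorbs L.toAlgebra f (fun _ => L.zero) L.zero →
      ∀ (j : Fin (n - 1)) (x : Fin (n - 1) → α) (u v : α),
        f (Function.update x j (L.mul u v)) =
          L.mul (f (Function.update x j u)) (f (Function.update x j v))) ∧
  (∀ k : ℕ, 2 ≤ k → k < n →
      commList (Fin.snoc (fun _ : Fin (n - k) => (Con.top : Con L.toAlgebra))
        (nfold Con.top k)) = Con.bot)

/-- `A` is polynomially equivalent to an `n`-type expanded loop on the same carrier. -/
def PolyEquivNTypeLoop (A : Algebra σ) (n : ℕ) : Prop :=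
  ∃ (ι : Type) (ar : ι → ℕ) (L : ExpLoop ι ar A.carrier),
    L.IsNType n ∧
    ∀ (k : ℕ) (f : (Fin k → A.carrier) → A.carrier),
      IsPolynomial A f ↔ IsPolynomial L.toAlgebra f

/-- Left-associated product of a list with initial value `c`. -/
def lprodFrom {β : Type} (mul : β → β → β) (c : β) (l : List β) : β := List.foldl mul c l

/-- Left-associated product of a list (with a default value for the empty list). -/
def lprodList {β : Type} (mul : β → β → β) (dflt : β) : List β → β
  | [] => dflt
  | a :: l => List.foldl mul a l

/-- Left-associated product of a nonempty tuple. -/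
def lassoc {β : Type} (mul : β → β → β) : {m : ℕ} → (Fin (m + 1) → β) → β
  | 0, y => y 0
  | (m+1), y => mul (lassoc mul (Fin.init y)) (y (Fin.last (m+1)))

/-- `A` has a representation of degree `n`. -/
def HasRepOfDegree (A : Algebra σ) (n : ℕ) : Prop :=
  ∃ (z : A.carrier) (r : (Fin 2 → A.carrier) → A.carrier),
    IsPolynomial A r ∧ (∀ x : A.carrier, r ![z, x] = x) ∧ (∀ x : A.carrier, r ![x, z] = x) ∧
    ∀ (k : ℕ) (f : (Fin k → A.carrier) → A.carrier), IsPolynomial A f →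
      ∃ (c : A.carrier) (R : ℕ → (Fin k → A.carrier) → A.carrier),
        (∀ m : ℕ, 1 ≤ m → m ≤ min k n →
          ∃ (l : List (Finset (Fin k)))
            (t : (S : Finset (Fin k)) → (Fin S.card → A.carrier) → A.carrier),
            l.Nodup ∧
            (∀ S : Finset (Fin k), S ∈ l ↔ S.card = m) ∧
            (∀ S ∈ l, IsPolynomial A (t S) ∧ Absorbs A (t S) (fun _ => z) z) ∧
            (∀ x : Fin k → A.carrier,
              R m x = lprodList (fun u v => r ![u, v]) z
                (l.map (fun S => t S (fun j => x ((S.orderIsoOfFin rfl j).val)))))) ∧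
        ∀ x : Fin k → A.carrier,
          f x = lprodFrom (fun u v => r ![u, v]) c
            ((List.range' 1 (min k n)).map (fun m => R m x))

/-- Products of `0`-absorbing polynomials (of arities between `lo` and `hi`)
in a given set of variables. -/
inductive ProdOfAbs {ι : Type} {ar : ι → ℕ} {α : Type} (L : ExpLoop ι ar α)
    (lo hi : ℕ) {I : Type} : ((I → α) → α) → Prop
  | base {p : ℕ} (h : (Fin p → α) → α) (sel : Fin p → I) :
      lo ≤ p → p ≤ hi → IsPolynomial L.toAlgebra h →
      Absorbs L.toAlgebra h (fun _ => L.zero) L.zero →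
      ProdOfAbs L lo hi (fun v => h (fun j => v (sel j)))
  | mul {F G : (I → α) → α} :
      ProdOfAbs L lo hi F → ProdOfAbs L lo hi G →
      ProdOfAbs L lo hi (fun v => L.mul (F v) (G v))

/-- The terms `q_m` (for `m ≥ 2`, `qSeq q (m-2)` is `q_m`):
`q₂ := q`, `q_{m+1}(x,y,z) := q(x, q_m(x,y,y), q_m(x,y,z))`. -/
def qSeq (q : Term σ (Fin 3)) : ℕ → Term σ (Fin 3)
  | 0 => q
  | (k+1) => q.subst ![Term.var 0, (qSeq q k).subst ![Term.var 0, Term.var 1, Term.var 1], qSeq q k]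


/-! ### Helper lemmas for the proof -/

theorem eval_subst' {X Y : Type} (A : Algebra σ) (v : Y → A.carrier) (s : X → Term σ Y)
    (t : Term σ X) : (t.subst s).eval A v = t.eval A (fun x => (s x).eval A v) := by
  induction t with
  | var x => rfl
  | app o t ih =>
    simp only [Term.subst, Term.eval]
    exact congrArg _ (funext ih)

theorem poly_eval {X : Type} (A : Algebra σ) {n : ℕ}
    (v : X → (Fin n → A.carrier) → A.carrier) (hv : ∀ x, IsPolynomial A (v x))
    (t : Term σ X) : IsPolynomial A (fun y => t.eval A (fun x => v x y)) := by
  induction t with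
  | var x => exact hv x
  | app o t ih => exact IsPolynomial.app o (fun j y => (t j).eval A (fun x => v x y)) ih

theorem poly_eval3 (A : Algebra σ) {n : ℕ} (f g h : (Fin n → A.carrier) → A.carrier)
    (hf : IsPolynomial A f) (hg : IsPolynomial A g) (hh : IsPolynomial A h)
    (t : Term σ (Fin 3)) : IsPolynomial A (fun y => t.eval A ![f y, g y, h y]) := by
  have := poly_eval A ![f, g, h] (by intro x; fin_cases x <;> assumption) t
  convert this using 3 with y
  ext x; fin_cases x <;> rfl

theorem poly_reindex (A : Algebra σ) {n m : ℕ} (s : Fin n → Fin m)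
    (p : (Fin n → A.carrier) → A.carrier) (hp : IsPolynomial A p) :
    IsPolynomial A (fun y : Fin m → A.carrier => p (fun i => y (s i))) := by
  induction hp with
  | proj i => exact IsPolynomial.proj (s i)
  | const a => exact IsPolynomial.const a
  | app o g _ ih => exact IsPolynomial.app o (fun j y => g j (fun i => y (s i))) (fun j => ih j)

/-- The vertex of the cube `{a,b}^(n+1)` given by `ε` on the first `n` coordinates and `s`
on the last one. -/
def vertex {β : Type} {n : ℕ} (a b : β) (s : Bool) (ε : Fin n → Bool) : Fin (n + 1) → β :=
  chooseVec id (fun _ => a) (fun _ => b) (Fin.lastCases (motive := fun _ => Bool) s ε)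

theorem vertex_succ {β : Type} {n : ℕ} (a b : β) (s : Bool) (ε : Fin (n + 1) → Bool)
    (i : Fin (n + 1)) : vertex a b s ε i.succ = vertex a b s (fun j => ε j.succ) i := by
  have : Fin.lastCases (motive := fun _ => Bool) s ε i.succ
      = Fin.lastCases (motive := fun _ => Bool) s (fun j => ε j.succ) i := by
    refine Fin.lastCases ?_ (fun j => ?_) i
    · rw [Fin.succ_last, Fin.lastCases_last, Fin.lastCases_last]
    · rw [Fin.succ_castSucc, Fin.lastCases_castSucc, Fin.lastCases_castSucc]
  simp only [vertex, chooseVec, id, this]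

theorem vertex_zero {β : Type} {n : ℕ} (a b : β) (s : Bool) (ε : Fin (n + 1) → Bool) :
    vertex a b s ε 0 = if ε 0 then b else a := by
  have : Fin.lastCases (motive := fun _ => Bool) s ε (0 : Fin (n + 2)) = ε 0 := by
    rw [← Fin.castSucc_zero, Fin.lastCases_castSucc]
  simp only [vertex, chooseVec, id, this]

/-- The pair `(c, e)` is the last edge of an `(n+1)`-dimensional cube of a polynomial, all of whose
other parallel edges are trivial. -/
def Good (A : Algebra σ) (a b : A.carrier) (n : ℕ) (c e : A.carrier) : Prop :=
  ∃ p : (Fin (n + 1) → A.carrier) → A.carrier, IsPolynomial A p ∧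
    (∀ ε : Fin n → Bool, ε ≠ (fun _ => true) →
      p (vertex a b false ε) = p (vertex a b true ε)) ∧
    p (vertex a b false fun _ => true) = c ∧ p (vertex a b true fun _ => true) = e

theorem good_zero (A : Algebra σ) (a b : A.carrier) : Good A a b 0 a b :=
  ⟨fun x => x 0, IsPolynomial.proj 0, fun ε h => absurd (Subsingleton.elim _ _) h, rfl, rfl⟩

theorem good_centralizes {A : Algebra σ} {a b : A.carrier} {n : ℕ} {c e : A.carrier}
    (h : Good A a b n c e) (θ δ : Con A) (hab : θ.r a b)
    (hC : Centralizes (fun _ : Fin n => θ) θ δ) : δ.r c e := by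
  obtain ⟨p, hp, h1, rfl, rfl⟩ := h
  refine hC (n + 1) p hp id (fun _ => a) (fun _ => b) ?_ ?_
  · intro i
    refine Fin.lastCases ?_ (fun j => ?_) i <;> simpa using hab
  · intro ε hε
    have := h1 ε hε
    unfold vertex at this
    rw [this]
    exact δ.refl _

theorem good_succ {A : Algebra σ} {a b : A.carrier} {n : ℕ} {c e u : A.carrier}
    (h : Good A a b n c e) (t : Term σ (Fin 3)) (ht : ∀ y, t.eval A ![a, y, a] = a)
    (r : A.carrier → A.carrier)
    (hr : ∀ (k : ℕ) (f : (Fin k → A.carrier) → A.carrier), IsPolynomial A f →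
      IsPolynomial A (fun x => r (f x))) (ha : r a = a) (hb : r b = u) :
    Good A a b (n + 1) (t.eval A ![a, c, u]) (t.eval A ![a, e, u]) := by
  obtain ⟨p, hp, h1, rfl, rfl⟩ := h
  refine ⟨fun y => t.eval A ![a, p (fun i => y i.succ), r (y 0)],
    poly_eval3 A _ _ _ (IsPolynomial.const a) (poly_reindex A _ p hp)
      (hr _ _ (IsPolynomial.proj 0)) t, ?_, ?_, ?_⟩
  · intro ε hε
    simp only [vertex_succ, vertex_zero]
    cases h0 : ε 0 with
    | false => simp [ha, ht]
    | true =>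
      have : (fun j : Fin n => ε j.succ) ≠ fun _ => true := by
        intro hh
        apply hε
        ext j
        refine Fin.cases h0 (fun i => ?_) j
        exact congrFun hh i
      have h2 := h1 _ this
      change t.eval A ![a, p (vertex a b false _), _] = t.eval A ![a, p (vertex a b true _), _]
      rw [h2]
  · simp only [vertex_succ, vertex_zero, if_true, hb]
  · simp only [vertex_succ, vertex_zero, if_true, hb]

theorem eqv_succ {A : Algebra σ} {a b : A.carrier} {n : ℕ} {c e u : A.carrier}
    (h : Relation.EqvGen (Good A a b n) c e) (t : Term σ (Fin 3))
    (ht : ∀ y, t.eval A ![a, y, a] = a)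
    (r : A.carrier → A.carrier)
    (hr : ∀ (k : ℕ) (f : (Fin k → A.carrier) → A.carrier), IsPolynomial A f →
      IsPolynomial A (fun x => r (f x))) (ha : r a = a) (hb : r b = u) :
    Relation.EqvGen (Good A a b (n + 1)) (t.eval A ![a, c, u]) (t.eval A ![a, e, u]) := by
  induction h with
  | rel x y h => exact .rel _ _ (good_succ h t ht r hr ha hb)
  | refl x => exact .refl _
  | symm x y _ ih => exact .symm _ _ ih
  | trans x y z _ _ ih1 ih2 => exact .trans _ _ _ ih1 ih2

theorem eqv_step {A : Algebra σ} {a b : A.carrier} {n : ℕ} {u : A.carrier}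
    (h : Relation.EqvGen (Good A a b n) a u)
    (r : A.carrier → A.carrier)
    (hr : ∀ (k : ℕ) (f : (Fin k → A.carrier) → A.carrier), IsPolynomial A f →
      IsPolynomial A (fun x => r (f x))) (ha : r a = a) (hb : r b = u)
    (N : ℕ) (d : Fin (N + 1) → Term σ (Fin 3))
    (hd1 : ∀ v : Fin 3 → A.carrier, (d 0).eval A v = v 0)
    (hd2 : ∀ (i : Fin (N + 1)) (x y : A.carrier), (d i).eval A ![x, y, x] = x)
    (hdeven : ∀ i : Fin N, (i.val + 1) % 2 = 0 →
      ∀ x z : A.carrier, (d i.castSucc).eval A ![x, x, z] = (d i.succ).eval A ![x, x, z])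
    (hdodd : ∀ i : Fin N, (i.val + 1) % 2 = 1 →
      ∀ x z : A.carrier, (d i.castSucc).eval A ![x, z, z] = (d i.succ).eval A ![x, z, z])
    (i : Fin (N + 1)) :
    Relation.EqvGen (Good A a b (n + 1)) a ((d i).eval A ![a, u, u]) := by
  have key := fun i => eqv_succ h (d i) (hd2 i a) r hr ha hb
  induction i using Fin.induction with
  | zero => rw [hd1]; exact .refl _
  | succ i ih =>
    rcases Nat.mod_two_eq_zero_or_one (i.val + 1) with h0 | h0
    · refine ih.trans _ _ _ (.trans _ _ _ (.symm _ _ (key i.castSucc)) ?_)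
      rw [hdeven i h0]
      exact key i.succ
    · rw [← hdodd i h0]
      exact ih

theorem qSeq_succ_eval (A : Algebra σ) (q : Term σ (Fin 3)) (k : ℕ) (x y z : A.carrier) :
    (qSeq q (k + 1)).eval A ![x, y, z] = q.eval A ![x, (qSeq q k).eval A ![x, y, y],
      (qSeq q k).eval A ![x, y, z]] := by
  rw [qSeq, eval_subst']
  congr 1
  ext i
  fin_cases i
  · rfl
  · simp only [Fin.mk_one, Matrix.cons_val_one, Matrix.cons_val_zero, eval_subst']
    congr 1
    ext j
    fin_cases j <;> rfl
  · rfl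

theorem qSeq_left (A : Algebra σ) (q : Term σ (Fin 3))
    (hq : ∀ x z : A.carrier, q.eval A ![x, x, z] = z) (k : ℕ) (x z : A.carrier) :
    (qSeq q k).eval A ![x, x, z] = z := by
  induction k generalizing z with
  | zero => exact hq x z
  | succ k ih => rw [qSeq_succ_eval, ih, ih, hq]

/-- Theorem 4.12 of "On Supernilpotent Algebras": in a congruence modular variety
with Gumm terms `d₁,…,d_N,q` (here `d 0` is `d₁` and `d (Fin.last N)` is `d_N`),
the terms `q_m` (`qSeq q (m-2)`) are `m`-difference terms: `q_m(x,x,z) = z` holds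
identically and `q_m(a,b,b) ≡ a mod [θ(a,b),…,θ(a,b)]_m`. -/
theorem gumm_terms_give_n_difference_terms {σ : Signature} (V : Algebra σ → Prop)
    (hV : IsVariety V)
    (N : ℕ) (d : Fin (N + 1) → Term σ (Fin 3)) (q : Term σ (Fin 3))
    (hd1 : ∀ A : Algebra σ, V A → ∀ v : Fin 3 → A.carrier, (d 0).eval A v = v 0)
    (hd2 : ∀ (i : Fin (N + 1)) (A : Algebra σ), V A → ∀ x y : A.carrier,
      (d i).eval A ![x, y, x] = x)
    (hdeven : ∀ i : Fin N, (i.val + 1) % 2 = 0 → ∀ A : Algebra σ, V A →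
      ∀ x z : A.carrier, (d i.castSucc).eval A ![x, x, z] = (d i.succ).eval A ![x, x, z])
    (hdodd : ∀ i : Fin N, (i.val + 1) % 2 = 1 → ∀ A : Algebra σ, V A →
      ∀ x z : A.carrier, (d i.castSucc).eval A ![x, z, z] = (d i.succ).eval A ![x, z, z])
    (hdq : ∀ A : Algebra σ, V A → ∀ x z : A.carrier,
      (d (Fin.last N)).eval A ![x, z, z] = q.eval A ![x, z, z])
    (hq : ∀ A : Algebra σ, V A → ∀ x z : A.carrier, q.eval A ![x, x, z] = z) :
    ∀ m : ℕ, 2 ≤ m →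
      (∀ A : Algebra σ, V A → ∀ a c : A.carrier, (qSeq q (m - 2)).eval A ![a, a, c] = c) ∧
      (∀ A : Algebra σ, V A → ∀ a b : A.carrier,
        (nfold (conPair A a b) m).r ((qSeq q (m - 2)).eval A ![a, b, b]) a) := by
  intro m hm
  obtain ⟨k, rfl⟩ : ∃ k, m = k + 2 := ⟨m - 2, by omega⟩
  rw [Nat.add_sub_cancel]
  refine ⟨fun A hA a c => qSeq_left A q (hq A hA) k a c, fun A hA a b => ?_⟩
  have chain : ∀ k, Relation.EqvGen (Good A a b (k + 1)) a ((qSeq q k).eval A ![a, b, b]) := by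
    intro k
    induction k with
    | zero =>
      have := eqv_step (Relation.EqvGen.rel _ _ (good_zero A a b)) id (fun _ _ h => h) rfl rfl N d
        (hd1 A hA) (fun i => hd2 i A hA) (fun i h => hdeven i h A hA) (fun i h => hdodd i h A hA)
        (Fin.last N)
      rw [hdq A hA] at this
      exact this
    | succ k ih =>
      have := eqv_step ih (fun z => (qSeq q k).eval A ![a, z, z])
        (fun _ f h => poly_eval3 A _ _ _ (IsPolynomial.const a) h h _)
        (qSeq_left A q (hq A hA) k a a) rfl N d
        (hd1 A hA) (fun i => hd2 i A hA) (fun i h => hdeven i h A hA) (fun i h => hdodd i h A hA)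
        (Fin.last N)
      rw [hdq A hA] at this
      rw [qSeq_succ_eval]
      exact this
  intro δ hδ
  have hab : (conPair A a b).r a b := fun c hc => hc (a, b) rfl
  have main : ∀ c e, Relation.EqvGen (Good A a b (k + 1)) c e → δ.r c e := by
    intro c e h
    induction h with
    | rel x y h => exact good_centralizes h _ δ hab hδ
    | refl x => exact δ.refl _
    | symm x y _ ih => exact δ.symm ih
    | trans x y z _ _ ih1 ih2 => exact δ.trans ih1 ih2
  exact δ.symm (main _ _ (chain k))

end UA
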